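/- Let n ≥ 1 and j ≥ 1 be integers, let R₁, …, R_j be nonnegative integers with R₁ + ⋯ + R_j ≤ n − j, set γ_v = n − v + 1 − Σ_{u=1}^{v−1} R_u for 1 ≤ v ≤ j + 1, and let θ > 0, T > 0 and an integer i with 1 ≤ i ≤ j. Let μ be the measure on ℝ^j whose density with respect to Lebesgue measure is z ↦ 1_{0 < z₁ < ⋯ < z_j < T} · exp(−(1/θ)(Σ_{s=1}^{j} z_s(1 + R_s) + T γ_{j+1})), and let g(z) = (Σ_{s=1}^{j} z_s(1 + R_s) + T γ_{j+1})/i. Then the pushforward measure g_*μ has Lebesgue density x ↦ θ^j Σ_{v=0}^{j} [ (−1)^v e^{−(T/θ) γ_{j−v+1}} / ( (∏_{h=1}^{v} (γ_{j+1−v} − γ_{j+1−v+h})) (∏_{h=1}^{j−v} (γ_h − γ_{j−v+1})) ) ] · f_G(x; Tγ_{j−v+1}/i, j, i/θ). (This is the conditional density of the MLE θ̂₁ = W/D₁ given J = j failures before T with D₁ = i due to cause 1, up to the common normalizing constant.) -/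

import Mathlib

open MeasureTheory

/-- `γ_v = n − v + 1 − Σ_{u=1}^{v−1} R_u`, the number of surviving units at the time of the
`v`-th failure in a progressive censoring scheme with removals `R 1, R 2, …`. -/
noncomputable def gam (n : ℕ) (R : ℕ → ℕ) (v : ℕ) : ℝ :=
  (n : ℝ) - v + 1 - ∑ u ∈ Finset.Icc 1 (v - 1), (R u : ℝ)

/-- `fG x a b c`: density at `x` of the shifted Gamma distribution with shift `a`,
shape `b` and rate `c`, i.e. `(c^b/Γ(b)) (x − a)^{b−1} e^{−c(x−a)}` for `x > a`. -/
noncomputable def fG (x a b c : ℝ) : ℝ :=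
  if a < x then c ^ b / Real.Gamma b * (x - a) ^ (b - 1) * Real.exp (-c * (x - a)) else 0

noncomputable def pp (k : ℕ) (x : ℝ) : ℝ := if 0 < x then x ^ k / (k.factorial : ℝ) else 0

lemma pp_mono (k : ℕ) : Monotone (pp k) := by
  intro x y h
  unfold pp
  split_ifs with h1 h2 h2
  · gcongr
  · exact absurd (lt_of_lt_of_le h1 h) h2
  · positivity
  · exact le_rfl

lemma pp_succ_eq (k : ℕ) (x : ℝ) : pp (k+1) x = (max x 0) ^ (k+1) / ((k+1).factorial : ℝ) := by
  unfold pp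
  split_ifs with h
  · rw [max_eq_left h.le]
  · rw [max_eq_right (not_lt.1 h)]; simp

lemma pp_succ_cont (k : ℕ) : Continuous (pp (k+1)) := by
  have : pp (k+1) = fun x => (max x 0) ^ (k+1) / ((k+1).factorial : ℝ) := funext (pp_succ_eq k)
  rw [this]; fun_prop

lemma pp_hasDerivAt (k : ℕ) (x : ℝ) (hx : x ≠ 0) : HasDerivAt (pp (k+1)) (pp k x) x := by
  rcases lt_or_gt_of_ne hx with h | h
  · have h1 : pp k x = 0 := by simp [pp, h.le]
    rw [h1]
    refine (hasDerivAt_const x (0:ℝ)).congr_of_eventuallyEq ?_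
    filter_upwards [Iio_mem_nhds h] with y hy
    have : y < 0 := hy
    simp [pp, this.le]
  · have h1 : pp k x = (((k+1 : ℕ):ℝ) * x ^ (k+1-1)) / ((k+1).factorial : ℝ) := by
      simp only [pp, h, if_true, Nat.factorial_succ, Nat.cast_mul, Nat.add_sub_cancel]
      have : ((k+1 : ℕ):ℝ) ≠ 0 := by positivity
      have : (k.factorial:ℝ) ≠ 0 := by positivity
      field_simp
    rw [h1]
    refine ((hasDerivAt_pow (k+1) x).div_const _).congr_of_eventuallyEq ?_
    filter_upwards [Ioi_mem_nhds h] with y hy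
    have : 0 < y := hy
    simp [pp, this]

lemma pp_intervalIntegrable (k : ℕ) (c d T : ℝ) (hd : 0 < d) :
    IntervalIntegrable (fun t => pp k (c - t * d)) volume 0 T := by
  apply Antitone.intervalIntegrable
  intro s t h
  apply pp_mono
  nlinarith

lemma pp_integral (k : ℕ) (c d T : ℝ) (hd : 0 < d) :
    ∫ t in (0:ℝ)..T, pp k (c - t * d) = d⁻¹ * (pp (k+1) c - pp (k+1) (c - T * d)) := by
  have := integral_eq_of_hasDerivAt_off_countable (fun t => - d⁻¹ * pp (k+1) (c - t * d))
    (fun t => pp k (c - t * d)) (a := 0) (b := T) (s := {c / d}) (Set.countable_singleton _)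
    ?_ ?_ (pp_intervalIntegrable k c d T hd)
  · rw [this]; simp; ring
  · exact (continuous_const.mul ((pp_succ_cont k).comp (by fun_prop))).continuousOn
  · intro x hx
    have hne : c - x * d ≠ 0 := by
      intro h
      apply hx.2
      rw [Set.mem_singleton_iff]
      field_simp
      linarith
    have h1 : HasDerivAt (fun t => c - t * d) (-(1 * d)) x :=
      ((hasDerivAt_id x).mul_const d).const_sub c
    have h2 := ((pp_hasDerivAt k _ hne).comp x h1).const_mul (-d⁻¹)
    refine h2.congr_deriv ?_
    field_simp

lemma pp_measurable (k : ℕ) : Measurable (pp k) := (pp_mono k).measurable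

noncomputable def pD (k : ℕ) (a : ℕ → ℝ) (T w : ℝ) : ℝ :=
  ∑ m ∈ Finset.range (k+2), (∏ x ∈ (Finset.range (k+2)).erase m, (a x - a m))⁻¹ * pp k (w - T * a m)

lemma pfrac (N : ℕ) (hN : 0 < N) (a : ℕ → ℝ) (ha : StrictAnti a) :
    ∑ m ∈ Finset.range N, (∏ x ∈ (Finset.range N).erase m, (a x - a m))⁻¹ * (a m - a N)⁻¹
      = (∏ x ∈ Finset.range N, (a x - a N))⁻¹ := by
  have h := Lagrange.eval_interpolate_not_at_node (s := Finset.range N) (v := fun m => - a m)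
    (fun _ => (1:ℝ)) (x := - a N) (by
      intro i hi h
      have := ha (Finset.mem_range.1 hi)
      linarith)
  have h1 : (Lagrange.interpolate (Finset.range N) (fun m => - a m)) (fun _ => (1:ℝ)) = 1 := by
    rw [Lagrange.interpolate_apply]
    simp only [map_one, one_mul]
    apply Lagrange.sum_basis
    · exact (neg_injective.comp ha.injective).injOn
    · simpa using hN.ne'
  rw [h1] at h
  simp only [Polynomial.eval_one, Lagrange.eval_nodal, Lagrange.nodalWeight, mul_one,
    sub_neg_eq_add, neg_add_eq_sub, Finset.prod_inv_distrib] at h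
  exact eq_inv_of_mul_eq_one_right h.symm

lemma pD_integrable (k : ℕ) (a : ℕ → ℝ) (ha : StrictAnti a) (T w : ℝ) :
    IntervalIntegrable (fun t => pD k a t (w - (T - t) * a (k+2))) volume 0 T := by
  unfold pD
  have : (fun t => ∑ m ∈ Finset.range (k+2), (∏ x ∈ (Finset.range (k+2)).erase m, (a x - a m))⁻¹ *
      pp k (w - (T - t) * a (k+2) - t * a m)) = ∑ m ∈ Finset.range (k+2), (fun t => (∏ x ∈ (Finset.range (k+2)).erase m, (a x - a m))⁻¹ *
      pp k ((w - T * a (k+2)) - t * (a m - a (k+2)))) := by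
    ext t
    rw [Finset.sum_apply]
    refine Finset.sum_congr rfl fun m _ => ?_
    congr 2; ring
  rw [this]
  apply IntervalIntegrable.sum
  intro m hm
  apply IntervalIntegrable.const_mul
  apply pp_intervalIntegrable
  exact sub_pos.2 (ha (Finset.mem_range.1 hm))

lemma pD_step (k : ℕ) (a : ℕ → ℝ) (ha : StrictAnti a) (T w : ℝ) :
    ∫ t in (0:ℝ)..T, pD k a t (w - (T - t) * a (k+2)) = pD (k+1) a T w := by
  have : (fun t => pD k a t (w - (T - t) * a (k+2))) = (fun t => ∑ m ∈ Finset.range (k+2), (∏ x ∈ (Finset.range (k+2)).erase m, (a x - a m))⁻¹ *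
      pp k ((w - T * a (k+2)) - t * (a m - a (k+2)))) := by
    ext t
    unfold pD
    refine Finset.sum_congr rfl fun m _ => ?_
    congr 2; ring
  rw [this, intervalIntegral.integral_finsetSum]
  · have hp := pfrac (k+2) (by omega) a ha
    unfold pD
    rw [Finset.sum_range_succ _ (k+1+1)]
    have e1 : (Finset.range (k+1+2)).erase (k+1+1) = Finset.range (k+2) := by
      ext x; simp; omega
    rw [e1, show k+1+1 = k+2 from rfl, ← hp, Finset.sum_mul, ← Finset.sum_add_distrib]
    refine Finset.sum_congr rfl fun m hm => ?_
    have hm' := Finset.mem_range.1 hm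
    have hd := sub_pos.2 (ha hm')
    rw [intervalIntegral.integral_const_mul, pp_integral _ _ _ _ hd]
    have e2 : (Finset.range (k+1+2)).erase m = insert (k+2) ((Finset.range (k+2)).erase m) := by
      ext x; simp; omega
    rw [e2, Finset.prod_insert (by simp), mul_inv,
      show a (k+2) - a m = -(a m - a (k+2)) by ring, inv_neg,
      show w - T * a (k+2) - T * (a m - a (k+2)) = w - T * a m by ring]
    ring
  · intro m hm
    apply IntervalIntegrable.const_mul
    apply pp_intervalIntegrable
    exact sub_pos.2 (ha (Finset.mem_range.1 hm))

lemma pD_zero (a : ℕ → ℝ) (T w : ℝ) :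
    pD 0 a T w = (a 0 - a 1)⁻¹ * (pp 0 (w - T * a 1) - pp 0 (w - T * a 0)) := by
  have e0 : (Finset.range 2).erase 0 = {1} := by decide
  have e1 : (Finset.range 2).erase 1 = {0} := by decide
  simp only [pD, zero_add, Finset.sum_range_succ, Finset.range_zero, Finset.sum_empty, e0, e1,
    Finset.prod_singleton]
  rw [show a 1 - a 0 = -(a 0 - a 1) by ring, inv_neg]
  ring

lemma pD_nonneg (k : ℕ) (a : ℕ → ℝ) (ha : StrictAnti a) (T w : ℝ) (hT : 0 ≤ T) :
    0 ≤ pD k a T w := by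
  induction k generalizing T w with
  | zero =>
    rw [pD_zero]
    have := ha (Nat.zero_lt_one)
    apply mul_nonneg (inv_nonneg.2 (by linarith))
    apply sub_nonneg.2
    apply pp_mono
    nlinarith
  | succ k ih =>
    rw [← pD_step k a ha]
    apply intervalIntegral.integral_nonneg hT
    intro t ht
    exact ih _ _ ht.1

lemma pD_meas (k : ℕ) (a : ℕ → ℝ) : Measurable (fun q : ℝ × ℝ => pD k a q.1 q.2) := by
  unfold pD
  refine Finset.measurable_sum _ fun m _ => ?_
  refine Measurable.const_mul ?_ _
  exact (pp_measurable k).comp (by fun_prop)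

lemma pD_lint (k : ℕ) (a : ℕ → ℝ) (ha : StrictAnti a) (T w : ℝ) (hT : 0 ≤ T) :
    ∫⁻ t in Set.Ioo 0 T, ENNReal.ofReal (pD k a t (w - (T - t) * a (k+2))) =
      ENNReal.ofReal (pD (k+1) a T w) := by
  rw [← pD_step k a ha, intervalIntegral.integral_of_le hT, ofReal_integral_eq_lintegral_ofReal]
  · exact setLIntegral_congr Ioo_ae_eq_Ioc
  · exact (intervalIntegrable_iff_integrableOn_Ioc_of_le hT).1 (pD_integrable k a ha T w)
  · filter_upwards [ae_restrict_mem measurableSet_Ioc] with t ht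
    exact pD_nonneg k a ha _ _ ht.1.le

def SS (j : ℕ) (T : ℝ) : Set (Fin j → ℝ) := {z | StrictMono z ∧ ∀ h, 0 < z h ∧ z h < T}

noncomputable def WW (j : ℕ) (a : ℕ → ℝ) (T : ℝ) (z : Fin j → ℝ) : ℝ :=
  (∑ h : Fin j, z h * (a h.1 - a (h.1+1))) + T * a j

lemma WW_meas (j : ℕ) (a : ℕ → ℝ) (T : ℝ) : Measurable (WW j a T) := by
  unfold WW; fun_prop

lemma SS_meas (j : ℕ) (T : ℝ) : MeasurableSet (SS j T) := by
  have : SS j T = (⋂ x : Fin j, ⋂ y : Fin j, {z : Fin j → ℝ | x < y → z x < z y}) ∩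
      ⋂ h : Fin j, ({z : Fin j → ℝ | 0 < z h} ∩ {z | z h < T}) := by
    ext z; simp [SS, StrictMono]
  rw [this]
  refine MeasurableSet.inter (MeasurableSet.iInter fun x => MeasurableSet.iInter fun y => ?_)
    (MeasurableSet.iInter fun h => ?_)
  · by_cases hxy : x < y
    · simp only [hxy, true_imp_iff]
      exact measurableSet_lt (measurable_pi_apply x) (measurable_pi_apply y)
    · simp [hxy]
  · exact (measurableSet_lt measurable_const (measurable_pi_apply h)).inter
      (measurableSet_lt (measurable_pi_apply h) measurable_const)

lemma snoc_mem (j : ℕ) (T t : ℝ) (z : Fin j → ℝ) :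
    (Fin.snoc z t : Fin (j+1) → ℝ) ∈ SS (j+1) T ↔ t ∈ Set.Ioo 0 T ∧ z ∈ SS j t := by
  constructor
  · rintro ⟨h1, h2⟩
    refine ⟨by simpa using h2 (Fin.last j), fun x y hxy => ?_, fun h => ⟨?_, ?_⟩⟩
    · simpa using h1 (Fin.castSucc_lt_castSucc_iff.2 hxy)
    · simpa using (h2 h.castSucc).1
    · simpa using h1 (Fin.castSucc_lt_last h)
  · rintro ⟨h1, h2, h3⟩
    refine ⟨fun x y hxy => ?_, fun h => ?_⟩
    · induction y using Fin.lastCases with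
      | last =>
        induction x using Fin.lastCases with
        | last => exact absurd hxy (lt_irrefl _)
        | cast x => simpa using (h3 x).2
      | cast y =>
        induction x using Fin.lastCases with
        | last => exact absurd hxy (not_lt.2 (Fin.le_last _))
        | cast x => simpa using h2 (Fin.castSucc_lt_castSucc_iff.1 hxy)
    · induction h using Fin.lastCases with
      | last => simpa using h1
      | cast h => simpa using ⟨(h3 h).1, (h3 h).2.trans h1.2⟩

lemma snoc_WW (j : ℕ) (a : ℕ → ℝ) (T t : ℝ) (z : Fin j → ℝ) :
    WW (j+1) a T (Fin.snoc z t) = WW j a t z + (T - t) * a (j+1) := by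
  simp only [WW, Fin.sum_univ_castSucc, Fin.snoc_castSucc, Fin.snoc_last, Fin.val_castSucc,
    Fin.val_last]
  ring

lemma step (j : ℕ) (a : ℕ → ℝ) (T : ℝ) (F : ℝ → ENNReal) (hF : Measurable F) :
    ∫⁻ z, (SS (j+1) T).indicator (fun z => F (WW (j+1) a T z)) z =
      ∫⁻ t in Set.Ioo 0 T, ∫⁻ z, (SS j t).indicator (fun z => F (WW j a t z + (T - t) * a (j+1))) z := by
  have hp := (volume_preserving_piFinSuccAbove (fun _ : Fin (j+1) => ℝ) (Fin.last j)).symm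
  rw [MeasurePreserving.lintegral_map_equiv _ _ hp]
  have hm : Measurable ((SS (j+1) T).indicator (fun z => F (WW (j+1) a T z))) :=
    (hF.comp (WW_meas _ _ _)).indicator (SS_meas _ _)
  have hv : (volume : Measure (ℝ × (Fin j → ℝ))) = volume.prod volume := rfl
  erw [lintegral_prod _ (hm.comp (MeasurableEquiv.measurable _)).aemeasurable]
  rw [← lintegral_indicator measurableSet_Ioo]
  refine lintegral_congr fun t => ?_
  have key : ∀ z : Fin j → ℝ, (MeasurableEquiv.piFinSuccAbove (fun _ : Fin (j+1) => ℝ) (Fin.last j)).symm (t, z)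
      = (Fin.snoc z t : Fin (j+1) → ℝ) := by
    intro z
    exact Fin.insertNth_last' t z
  by_cases ht : t ∈ Set.Ioo 0 T
  · rw [Set.indicator_of_mem ht]
    refine lintegral_congr fun z => ?_
    rw [Function.comp_apply]
    erw [key z]
    by_cases hz : z ∈ SS j t
    · rw [Set.indicator_of_mem hz, Set.indicator_of_mem ((snoc_mem _ _ _ _).2 ⟨ht, hz⟩), snoc_WW]
    · rw [Set.indicator_of_notMem hz, Set.indicator_of_notMem (fun h => hz ((snoc_mem _ _ _ _).1 h).2)]
  · rw [Set.indicator_of_notMem ht]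
    convert lintegral_zero (α := Fin j → ℝ) using 2
    ext z
    rw [Function.comp_apply]
    erw [key z]
    rw [Set.indicator_of_notMem (fun h => ht ((snoc_mem _ _ _ _).1 h).1)]

lemma base (a : ℕ → ℝ) (ha : StrictAnti a) (T : ℝ) (hT : 0 < T) (F : ℝ → ENNReal) :
    ∫⁻ t in Set.Ioo 0 T, F (t * a 0 + (T - t) * a 1) =
      ∫⁻ w, F w * ENNReal.ofReal (pD 0 a T w) := by
  have hd : 0 < a 0 - a 1 := sub_pos.2 (ha Nat.zero_lt_one)
  have hc := lintegral_image_eq_lintegral_abs_deriv_mul (s := Set.Ioo 0 T)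
    (f := fun t => t * a 0 + (T - t) * a 1) (f' := fun _ => a 0 - a 1) measurableSet_Ioo
    (fun x _ => by
      have h1 := ((hasDerivAt_id x).mul_const (a 0)).add
        (((hasDerivAt_id x).const_sub T).mul_const (a 1))
      exact (h1.congr_deriv (by ring)).hasDerivWithinAt)
    (fun x _ y _ h => by
      have h : x * a 0 + (T - x) * a 1 = y * a 0 + (T - y) * a 1 := h
      have : (x - y) * (a 0 - a 1) = 0 := by linarith
      rcases mul_eq_zero.1 this with h | h <;> linarith)
    (fun w => F w * ENNReal.ofReal (a 0 - a 1)⁻¹)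
  have him : (fun t => t * a 0 + (T - t) * a 1) '' Set.Ioo 0 T = Set.Ioo (T * a 1) (T * a 0) := by
    ext w
    constructor
    · rintro ⟨t, ⟨h0, h1⟩, rfl⟩
      constructor <;> simp only <;> nlinarith
    · rintro ⟨h0, h1⟩
      refine ⟨(w - T * a 1) / (a 0 - a 1), ⟨by apply div_pos <;> linarith, ?_⟩, ?_⟩
      · rw [div_lt_iff₀ hd]; nlinarith
      · simp only; field_simp; ring
  have e1 : ∀ t, ENNReal.ofReal |a 0 - a 1| * (F (t * a 0 + (T - t) * a 1) * ENNReal.ofReal (a 0 - a 1)⁻¹)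
      = F (t * a 0 + (T - t) * a 1) := by
    intro t
    rw [mul_left_comm, ← ENNReal.ofReal_mul (abs_nonneg _), abs_of_pos hd, mul_inv_cancel₀ hd.ne']
    simp
  simp only [e1] at hc
  rw [← hc, him, ← lintegral_indicator measurableSet_Ioo]
  have hsub : ∀ᵐ w : ℝ, w ≠ T * a 0 := by
    simp [ae_iff, measure_singleton]
  refine lintegral_congr_ae ?_
  filter_upwards [hsub] with w hw
  rw [pD_zero]
  have hTT : T * a 1 < T * a 0 := by nlinarith
  by_cases hm : w ∈ Set.Ioo (T * a 1) (T * a 0)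
  · rw [Set.indicator_of_mem hm]
    have := hm.1
    have := hm.2
    simp [pp, hm.1, not_lt.2 hm.2.le]
  · rw [Set.indicator_of_notMem hm]
    by_cases h1 : w ≤ T * a 1
    · simp [pp, not_lt.2 h1, not_lt.2 (h1.trans hTT.le)]
    · have h1 := not_le.1 h1
      have h2 : T * a 0 < w := by
        rcases lt_or_gt_of_ne hw with h | h
        · exact absurd ⟨h1, h⟩ hm
        · exact h
      simp [pp, h1, h2]

lemma mainL (k : ℕ) (a : ℕ → ℝ) (ha : StrictAnti a) (T : ℝ) (hT : 0 < T) (F : ℝ → ENNReal)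
    (hF : Measurable F) :
    ∫⁻ z, (SS (k+1) T).indicator (fun z => F (WW (k+1) a T z)) z =
      ∫⁻ w, F w * ENNReal.ofReal (pD k a T w) := by
  induction k generalizing T F with
  | zero =>
    rw [step _ _ _ _ hF, ← base a ha T hT]
    refine lintegral_congr fun t => ?_
    rw [Measure.volume_pi_eq_dirac, lintegral_dirac, Set.indicator_of_mem]
    · simp [WW]
    · exact ⟨fun x => x.elim0, fun x => x.elim0⟩
  | succ k ih =>
    rw [step _ _ _ _ hF]
    have h1 : ∀ t ∈ Set.Ioo 0 T, ∫⁻ z, (SS (k+1) t).indicator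
          (fun z => F (WW (k+1) a t z + (T - t) * a (k+1+1))) z =
        ∫⁻ w, F w * ENNReal.ofReal (pD k a t (w - (T - t) * a (k+2))) := by
      intro t ht
      rw [ih t ht.1 (fun w => F (w + (T - t) * a (k+1+1))) (hF.comp (by fun_prop)),
        ← lintegral_sub_right_eq_self _ ((T - t) * a (k+2))]
      simp
    rw [setLIntegral_congr_fun measurableSet_Ioo h1, lintegral_lintegral_swap]
    · refine lintegral_congr fun w => ?_
      rw [lintegral_const_mul, pD_lint k a ha T w hT.le]
      exact ((pD_meas k a).comp (f := fun t : ℝ => (t, w - (T - t) * a (k+2))) (by fun_prop)).ennreal_ofReal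
    · apply Measurable.aemeasurable
      refine (hF.comp measurable_snd).mul (Measurable.ennreal_ofReal ?_)
      exact (pD_meas k a).comp (f := fun q : ℝ × ℝ => (q.1, q.2 - (T - q.1) * a (k+2))) (by fun_prop)

lemma gam_sub (n : ℕ) (R : ℕ → ℕ) (v : ℕ) :
    gam n R (v+1) - gam n R (v+1+1) = 1 + (R (v+1) : ℝ) := by
  simp only [gam, Nat.add_sub_cancel]
  rw [Finset.sum_Icc_succ_top (by omega)]
  push_cast
  ring

lemma gam_anti (n : ℕ) (R : ℕ → ℕ) : StrictAnti (fun m => gam n R (m+1)) := by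
  apply strictAnti_nat_of_succ_lt
  intro v
  have := gam_sub n R v
  have h : (0:ℝ) ≤ R (v+1) := by positivity
  linarith

lemma prod_split (a : ℕ → ℝ) (m v : ℕ) :
    ∏ x ∈ (Finset.range (m+v+1)).erase m, (a x - a m) =
      (-1) ^ v * ((∏ h ∈ Finset.Icc 1 v, (a m - a (m+h))) * ∏ x ∈ Finset.range m, (a x - a m)) := by
  induction v with
  | zero =>
    have : (Finset.range (m+0+1)).erase m = Finset.range m := by ext x; simp; omega
    rw [this]; simp
  | succ v ih =>
    have : (Finset.range (m+(v+1)+1)).erase m = insert (m+v+1) ((Finset.range (m+v+1)).erase m) := by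
      ext x; simp; omega
    rw [this, Finset.prod_insert (by simp), ih, Finset.prod_Icc_succ_top (by omega), ← add_assoc]
    ring

lemma term_eq (k i : ℕ) (hi : 1 ≤ i) (θ T x b : ℝ) (hθ : 0 < θ) :
    (i:ℝ) * Real.exp (-(1/θ) * (i * x)) * pp k (i * x - T * b) =
      θ ^ (k+1) * (Real.exp (-(T/θ) * b) * fG x (T * b / i) ((k+1 : ℕ) : ℝ) (i/θ)) := by
  have hi0 : (0:ℝ) < i := by exact_mod_cast hi
  have hiff : T * b / i < x ↔ 0 < i * x - T * b := by
    rw [div_lt_iff₀ hi0, sub_pos, mul_comm x]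
  unfold pp fG
  by_cases h : 0 < i * x - T * b
  · rw [if_pos h, if_pos (hiff.2 h), Real.rpow_natCast]
    push_cast
    rw [Real.Gamma_nat_eq_factorial, add_sub_cancel_right, Real.rpow_natCast]
    have e : i * x - T * b = i * (x - T * b / i) := by field_simp
    have e2 : Real.exp (-(1/θ) * (i * x)) =
        Real.exp (-(T/θ) * b) * Real.exp (-(i/θ) * (x - T * b / i)) := by
      rw [← Real.exp_add]; congr 1; field_simp; ring
    rw [e, e2, mul_pow, div_pow]
    have : (k.factorial:ℝ) ≠ 0 := by positivity
    field_simp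
    ring
  · rw [if_neg h, if_neg (fun h' => h (hiff.1 h'))]; simp

lemma dens_eq (n k i : ℕ) (R : ℕ → ℕ) (hi : 1 ≤ i) (θ T x : ℝ) (hθ : 0 < θ) :
    (i:ℝ) * Real.exp (-(1/θ) * (i * x)) * pD k (fun m => gam n R (m+1)) T (i * x) =
     (θ ^ (k+1) * ∑ v ∈ Finset.range (k+1 + 1),
            (-1 : ℝ) ^ v * Real.exp (-(T / θ) * gam n R (k+1 - v + 1)) /
                ((∏ h ∈ Finset.Icc 1 v, (gam n R (k+1 + 1 - v) - gam n R (k+1 + 1 - v + h))) *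
                  (∏ h ∈ Finset.Icc 1 (k+1 - v), (gam n R h - gam n R (k+1 - v + 1)))) *
              fG x (T * gam n R (k+1 - v + 1) / i) ((k+1 : ℕ) : ℝ) (i / θ)) := by
  unfold pD
  rw [← Finset.sum_range_reflect, Finset.mul_sum, Finset.mul_sum]
  refine Finset.sum_congr rfl fun v hv => ?_
  have hv' := Finset.mem_range.1 hv
  obtain ⟨m, hm⟩ : ∃ m, m + v = k + 1 := ⟨k+1-v, by omega⟩
  rw [show k + 2 - 1 - v = m by omega, show k + 1 - v = m by omega, show k + 1 + 1 - v = m + 1 by omega,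
    show k + 2 = m + v + 1 by omega, prod_split]
  have e : ∏ h ∈ Finset.Icc 1 m, (gam n R h - gam n R (m + 1)) =
      ∏ y ∈ Finset.range m, (gam n R (y+1) - gam n R (m + 1)) := by
    rw [← Finset.prod_image (s := Finset.range m) (g := fun y => y + 1)
      (f := fun h => gam n R h - gam n R (m+1)) (fun x _ y _ h => by simpa using h)]
    congr 1
    ext x
    simp only [Finset.mem_Icc, Finset.mem_image, Finset.mem_range]
    constructor
    · rintro ⟨h1, h2⟩; exact ⟨x - 1, by omega, by omega⟩
    · rintro ⟨y, h1, rfl⟩; omega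
  rw [e]
  simp only [add_right_comm m 1]
  have ht := term_eq k i hi θ T x (gam n R (m+1)) hθ
  set P := (∏ h ∈ Finset.Icc 1 v, (gam n R (m + 1) - gam n R (m + h + 1))) *
    ∏ y ∈ Finset.range m, (gam n R (y+1) - gam n R (m + 1))
  have hs : ((-1:ℝ)^v)⁻¹ = (-1)^v := by rw [← inv_pow]; norm_num
  rw [mul_inv, hs]
  linear_combination (-1:ℝ)^v * P⁻¹ * ht

/-- Case `Z_{k:m:n} < T < Z_{m:m:n}`: the pushforward of the (sub-probability) measure with
density `1_{0<z₁<⋯<z_j<T} exp(−(1/θ)(Σ z_s(1+R_s) + Tγ_{j+1}))` under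
`g(z) = (Σ z_s(1+R_s) + Tγ_{j+1})/i` has Lebesgue density
`x ↦ θ^j Σ_{v=0}^{j} (−1)^v e^{−(T/θ)γ_{j−v+1}} / [⋯] · f_G(x; Tγ_{j−v+1}/i, j, i/θ)`. -/
theorem conditional_density_mle_case_T (n j : ℕ) (hn : 1 ≤ n) (hj : 1 ≤ j) (R : ℕ → ℕ)
    (hR : (∑ u ∈ Finset.Icc 1 j, R u) + j ≤ n)
    (θ T : ℝ) (hθ : 0 < θ) (hT : 0 < T)
    (i : ℕ) (hi1 : 1 ≤ i) (hij : i ≤ j) :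
    Measure.map
        (fun z : Fin j → ℝ =>
          ((∑ h, z h * (1 + (R (h.1 + 1) : ℝ))) + T * gam n R (j + 1)) / i)
        (volume.withDensity fun z : Fin j → ℝ =>
          ENNReal.ofReal
            (Set.indicator {z : Fin j → ℝ | StrictMono z ∧ ∀ h, 0 < z h ∧ z h < T}
              (fun z => Real.exp
                (-(1 / θ) * ((∑ h, z h * (1 + (R (h.1 + 1) : ℝ))) + T * gam n R (j + 1)))) z)) =
      volume.withDensity fun x =>
        ENNReal.ofReal
          (θ ^ j * ∑ v ∈ Finset.range (j + 1),
            (-1 : ℝ) ^ v * Real.exp (-(T / θ) * gam n R (j - v + 1)) /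
                ((∏ h ∈ Finset.Icc 1 v, (gam n R (j + 1 - v) - gam n R (j + 1 - v + h))) *
                  (∏ h ∈ Finset.Icc 1 (j - v), (gam n R h - gam n R (j - v + 1)))) *
              fG x (T * gam n R (j - v + 1) / i) j (i / θ)) := by
  obtain ⟨k, rfl⟩ : ∃ k, j = k + 1 := ⟨j - 1, by omega⟩
  have hi0 : (0:ℝ) < i := by exact_mod_cast hi1
  set a : ℕ → ℝ := fun m => gam n R (m+1) with ha_def
  have ha : StrictAnti a := gam_anti n R
  have hW : ∀ z : Fin (k+1) → ℝ, (∑ h, z h * (1 + (R (h.1 + 1) : ℝ))) + T * gam n R (k + 1 + 1) =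
      WW (k+1) a T z := by
    intro z
    simp only [WW, ha_def, gam_sub]
  simp only [hW, ← dens_eq n k i R hi1 θ T _ hθ]
  have hg : Measurable (fun z => WW (k+1) a T z / (i:ℝ)) := (WW_meas _ _ _).div_const _
  ext s hs
  rw [Measure.map_apply hg hs, withDensity_apply _ (hg hs), withDensity_apply _ hs,
    ← lintegral_indicator (hg hs), ← lintegral_indicator hs]
  set F : ℝ → ENNReal := fun w => s.indicator 1 (w / i) * ENNReal.ofReal (Real.exp (-(1/θ) * w)) with hFd
  have hF : Measurable F := by
    refine Measurable.mul ?_ (by fun_prop)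
    exact (measurable_one.indicator hs).comp (measurable_id.div_const _)
  have hmain := mainL k a ha T hT F hF
  have h1 : ∀ z, ((fun z => WW (k+1) a T z / (i:ℝ)) ⁻¹' s).indicator (fun z => ENNReal.ofReal
      (Set.indicator {z : Fin (k+1) → ℝ | StrictMono z ∧ ∀ h, 0 < z h ∧ z h < T}
              (fun z => Real.exp (-(1 / θ) * WW (k+1) a T z)) z)) z =
      (SS (k+1) T).indicator (fun z => F (WW (k+1) a T z)) z := by
    intro z
    change _ = ({z : Fin (k+1) → ℝ | StrictMono z ∧ ∀ h, 0 < z h ∧ z h < T}).indicator _ z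
    by_cases h2 : z ∈ {z : Fin (k+1) → ℝ | StrictMono z ∧ ∀ h, 0 < z h ∧ z h < T}
    · by_cases h3 : WW (k+1) a T z / (i:ℝ) ∈ s
      · rw [Set.indicator_of_mem (show z ∈ (fun z => WW (k+1) a T z / (i:ℝ)) ⁻¹' s from h3),
          Set.indicator_of_mem h2, Set.indicator_of_mem h2]
        simp [hFd, h3]
      · rw [Set.indicator_of_notMem (show z ∉ (fun z => WW (k+1) a T z / (i:ℝ)) ⁻¹' s from h3),
          Set.indicator_of_mem h2]
        simp [hFd, h3]
    · rw [Set.indicator_of_notMem h2]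
      apply Set.indicator_apply_eq_zero.2
      intro _
      rw [Set.indicator_of_notMem h2]; simp
  rw [lintegral_congr h1, hmain]
  have hmeas : Measurable fun w => F w * ENNReal.ofReal (pD k a T w) := by
    refine hF.mul ?_
    exact ((pD_meas k a).comp (f := fun w : ℝ => (T, w)) (by fun_prop)).ennreal_ofReal
  have hc := lintegral_image_eq_lintegral_abs_deriv_mul (s := Set.univ)
    (f := fun x : ℝ => (i:ℝ) * x) (f' := fun _ => (i:ℝ)) MeasurableSet.univ
    (fun x _ => by simpa using (hasDerivAt_id x).const_mul (i:ℝ))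
    (fun x _ y _ h => mul_left_cancel₀ hi0.ne' h)
    (fun w => F w * ENNReal.ofReal (pD k a T w))
  rw [Set.image_univ, (mul_left_surjective₀ hi0.ne').range_eq] at hc
  simp only [Measure.restrict_univ] at hc
  rw [hc]
  refine lintegral_congr fun x => ?_
  have hx : (i:ℝ) * x / i = x := by field_simp
  by_cases h3 : x ∈ s
  · rw [Set.indicator_of_mem h3]
    simp only [hFd, hx, Set.indicator_of_mem h3, Pi.one_apply, one_mul]
    rw [abs_of_pos hi0, ENNReal.ofReal_mul (by positivity), ENNReal.ofReal_mul (by positivity),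
      mul_assoc]
  · rw [Set.indicator_of_notMem h3]
    simp [hFd, hx, h3]
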